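/- arXiv:math/0608649 — 3 statements merged into one kernel-verified Lean document; each statement's English description precedes it below -/
import Mathlib

section
/- Let p be an odd prime, let q ∈ ℚ_p satisfy |q - 1|_p < 1 with q ≠ 1, and let n be a nonnegative integer. Then the p-adic q-Riemann sums (1/[p^N]_{-q}) · Σ_{x=0}^{p^N - 1} [x]_q^n (-q)^x converge as N → ∞, and their limit E_{n,q} equals (1+q) · (1/(1-q))^n · Σ_{l=0}^n C(n,l) (-1)^l / (1 + q^{l+1}). (Here 1 + q^{l+1} ≠ 0 since |q^{l+1} - 1|_p < 1 and p is odd.) -/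
/-!
Expanding `(1 - q ^ x) ^ n` binomially turns the `N`-th Riemann sum into a combination of geometric
sums of ratio `-q ^ (l + 1)`. Since `p ^ N` is odd, with `r = q ^ (p ^ N)` it equals
`(1 + q) / (1 + r) * (1 / (1 - q)) ^ n * ∑ l, C(n, l) (-1) ^ l (1 + r ^ (l + 1)) / (1 + q ^ (l + 1))`
(`riemann_sum_eq`). As `q ≡ 1 mod p`, one has `q ^ (p ^ N) ≡ 1 mod p ^ (N + 1)`, so `r → 1`
(`tendsto_pow_prime_pow`), and every factor `(1 + r ^ (l + 1)) / (1 + r)` tends to `1`.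
The denominators `1 + q ^ k` do not vanish because `q ^ k ≡ 1` and `2` is a unit mod `p`.
-/

open Filter

lemma exists_padicInt_lift {p : ℕ} [Fact p.Prime] {q : ℚ_[p]} (hq1 : ‖q - 1‖ < 1) :
    ∃ z : ℤ_[p], (z : ℚ_[p]) = q ∧ (p : ℤ_[p]) ∣ z - 1 := by
  have h : ‖q‖ ≤ 1 := by
    have := Padic.nonarchimedean (q - 1) 1
    rw [sub_add_cancel, norm_one] at this
    exact this.trans (max_le hq1.le le_rfl)
  refine ⟨⟨q, h⟩, rfl, ?_⟩
  rw [← PadicInt.norm_lt_one_iff_dvd]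
  exact hq1

lemma one_add_pow_ne_zero {p : ℕ} [Fact p.Prime] (hodd : Odd p) {q : ℚ_[p]}
    (hq1 : ‖q - 1‖ < 1) (k : ℕ) : 1 + q ^ k ≠ 0 := by
  obtain ⟨z, rfl, hz⟩ := exists_padicInt_lift hq1
  intro h
  have h' : 1 + z ^ k = 0 := Subtype.ext h
  have hd : (p : ℤ_[p]) ∣ z ^ k - 1 := hz.trans (sub_one_dvd_pow_sub_one z k)
  have h2 : (p : ℤ_[p]) ∣ ((2 : ℕ) : ℤ_[p]) := by
    have e : ((2 : ℕ) : ℤ_[p]) = -(z ^ k - 1) := by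
      push_cast
      linear_combination h'
    rw [e]
    exact (dvd_neg).2 hd
  rw [← PadicInt.norm_lt_one_iff_dvd, PadicInt.norm_natCast_lt_one_iff] at h2
  have hp2 : p = 2 := (Nat.prime_dvd_prime_iff_eq Fact.out Nat.prime_two).1 h2
  subst hp2
  exact absurd hodd (by decide)

lemma tendsto_pow_prime_pow {p : ℕ} [Fact p.Prime] {q : ℚ_[p]} (hq1 : ‖q - 1‖ < 1) :
    Tendsto (fun N : ℕ => q ^ (p ^ N)) atTop (nhds 1) := by
  obtain ⟨z, rfl, hz⟩ := exists_padicInt_lift hq1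
  rw [tendsto_iff_norm_sub_tendsto_zero]
  have hp : (1 : ℝ) < p := by exact_mod_cast (Fact.out : p.Prime).one_lt
  have hlim : Tendsto (fun N : ℕ => ((p : ℝ)⁻¹) ^ (N + 1)) atTop (nhds 0) :=
    (tendsto_pow_atTop_nhds_zero_of_lt_one (by positivity) (inv_lt_one_of_one_lt₀ hp)).comp
      (tendsto_add_atTop_nat 1)
  refine squeeze_zero (fun _ => norm_nonneg _) (fun N => ?_) hlim
  have hd := dvd_sub_pow_of_dvd_sub hz N
  rw [one_pow, ← Ideal.mem_span_singleton, ← PadicInt.norm_le_pow_iff_mem_span_pow,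
    PadicInt.norm_def] at hd
  rw [zpow_neg, zpow_natCast, ← inv_pow] at hd
  exact hd

lemma riemann_sum_eq {K : Type*} [Field K] {q : K} (hne : ∀ k, 1 + q ^ k ≠ 0) (n : ℕ)
    {M : ℕ} (hM : Odd M) :
    (1 / ((1 - (-q) ^ M) / (1 + q))) *
        ∑ x ∈ Finset.range M, ((1 - q ^ x) / (1 - q)) ^ n * (-q) ^ x =
      (1 + q) / (1 + q ^ M) * (1 / (1 - q)) ^ n *
        ∑ l ∈ Finset.range (n + 1),
          (n.choose l : K) * (-1) ^ l * (1 + (q ^ M) ^ (l + 1)) / (1 + q ^ (l + 1)) := by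
  have hgeom (l : ℕ) : ∑ x ∈ Finset.range M, (-q ^ (l + 1)) ^ x =
      (1 + (q ^ M) ^ (l + 1)) / (1 + q ^ (l + 1)) := by
    have h1 := hne (l + 1)
    have h2 : -q ^ (l + 1) ≠ 1 := fun h => h1 (by rw [← h]; ring)
    rw [geom_sum_eq h2, hM.neg_pow, ← neg_div_neg_eq]
    congr 1 <;> ring
  have hbin (x : ℕ) : ((1 - q ^ x) / (1 - q)) ^ n * (-q) ^ x =
      (1 / (1 - q)) ^ n * ∑ l ∈ Finset.range (n + 1),
        (n.choose l : K) * (-1) ^ l * (-q ^ (l + 1)) ^ x := by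
    rw [div_eq_mul_one_div, mul_pow, mul_comm ((1 - q ^ x) ^ n), mul_assoc]
    congr 1
    rw [sub_eq_neg_add, add_pow, Finset.sum_mul]
    refine Finset.sum_congr rfl fun l _ => ?_
    rw [neg_pow (q ^ x), neg_pow q, neg_pow (q ^ (l + 1))]
    ring
  rw [Finset.sum_congr rfl fun x _ => hbin x, ← Finset.mul_sum, Finset.sum_comm, one_div_div,
    hM.neg_pow, sub_neg_eq_add, mul_assoc]
  simp only [← Finset.mul_sum, hgeom, mul_div_assoc]


/-- Let `p` be an odd prime, `q ∈ ℚ_p` with `|q-1|_p < 1`, `q ≠ 1`, `n : ℕ`.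
Then the `p`-adic `q`-Riemann sums `(1/[p^N]_{-q}) Σ_{x=0}^{p^N-1} [x]_q^n (-q)^x` converge
as `N → ∞` to `(1+q) · (1/(1-q))^n · Σ_{l=0}^n C(n,l)(-1)^l/(1+q^{l+1})`. -/
theorem stmt_10 (p : ℕ) [Fact p.Prime] (hodd : Odd p)
    (q : ℚ_[p]) (hq1 : ‖q - 1‖ < 1) (hq : q ≠ 1) (n : ℕ) :
    Tendsto (fun N : ℕ =>
        (1 / ((1 - (-q) ^ (p ^ N)) / (1 + q))) *
          ∑ x ∈ Finset.range (p ^ N), ((1 - q ^ x) / (1 - q)) ^ n * (-q) ^ x)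
      atTop
      (nhds ((1 + q) * (1 / (1 - q)) ^ n *
        ∑ l ∈ Finset.range (n + 1), (n.choose l : ℚ_[p]) * (-1) ^ l / (1 + q ^ (l + 1)))) := by
  have hne := one_add_pow_ne_zero hodd hq1
  have hr := tendsto_pow_prime_pow hq1
  have h2 : (1 + 1 : ℚ_[p]) ≠ 0 := by simp
  simp only [fun N : ℕ => riemann_sum_eq hne n (hodd.pow (n := N))]
  have key := ((tendsto_const_nhds (x := 1 + q)).div (hr.const_add 1) h2).mul_const
    ((1 / (1 - q)) ^ n) |>.mul (tendsto_finsetSum (Finset.range (n + 1)) fun l _ =>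
      (((hr.pow (l + 1)).const_add 1).const_mul ((n.choose l : ℚ_[p]) * (-1) ^ l)).div_const
        (1 + q ^ (l + 1)))
  convert key using 1
  congr 1
  -- At `r = 1` the factor `1 + r ^ (l + 1) = 2` cancels the prefactor `1 / (1 + r) = 1 / 2`.
  simp only [one_pow, mul_div_right_comm _ (1 + 1 : ℚ_[p]), ← Finset.sum_mul]
  field_simp
end

section
/- Let p be an odd prime, let q ∈ ℚ_p satisfy |q - 1|_p < 1 with q ≠ 1. Define in ℚ_p the q-Euler numbers E_{n,q} = (1+q) · (1/(1-q))^n · Σ_{l=0}^n C(n,l) (-1)^l / (1 + q^{l+1}). Then q · Σ_{l=0}^n C(n,l) q^l E_{l,q} + E_{n,q} equals 1+q if n = 0, and equals 0 if n > 0. -/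
/-!
Let `L` be the linear functional on `ℚ_[p][X]` with `L (X ^ l) = 1 / (1 + q ^ (l + 1))`. The binomial
theorem gives `E k = (1 + q) * L (((1 - X) / (1 - q)) ^ k)`. Since `1 + q ^ (l + 1) ≠ 0`, checking on
monomials yields the functional equation `q * L (f (q X)) + L f = f 1`. For
`f = ((1 - X) / (1 - q)) ^ n` one has
`f (q X) = (1 + q (1 - X) / (1 - q)) ^ n = ∑ l, C(n, l) q ^ l ((1 - X) / (1 - q)) ^ l`,
so the left-hand side of the recurrence is `(1 + q) * f 1 = (1 + q) * 0 ^ n`.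
-/

open Polynomial in
/-- The linear functional on polynomials sending `X ^ l` to `1 / (1 + q ^ (l + 1))`. -/
noncomputable def eulerFunctional {K : Type*} [Field K] (q : K) : K[X] →ₗ[K] K :=
  Polynomial.lsum fun l => LinearMap.mulRight K (1 / (1 + q ^ (l + 1)))

open Polynomial in
theorem eulerFunctional_C_mul_X_pow {K : Type*} [Field K] (q a : K) (l : ℕ) :
    eulerFunctional q (C a * X ^ l) = a / (1 + q ^ (l + 1)) := by
  rw [C_mul_X_pow_eq_monomial, eulerFunctional, Polynomial.lsum_apply,
    Polynomial.sum_monomial_index _ _ (by simp)]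
  simp [div_eq_mul_inv]

open Polynomial in
theorem eulerFunctional_C_mul {K : Type*} [Field K] (q a : K) (f : K[X]) :
    eulerFunctional q (C a * f) = a * eulerFunctional q f := by
  rw [← smul_eq_C_mul, map_smul, smul_eq_mul]

open Polynomial in
theorem eulerFunctional_comp {K : Type*} [Field K] (q : K)
    (h : ∀ l : ℕ, 1 + q ^ (l + 1) ≠ 0) (f : K[X]) :
    q * eulerFunctional q (f.comp (C q * X)) + eulerFunctional q f = f.eval 1 := by
  induction f using Polynomial.induction_on' with
  | add f g hf hg =>
    rw [add_comp, map_add, map_add, eval_add, ← hf, ← hg]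
    ring
  | monomial l a =>
    have hc : ((C a * X ^ l : K[X])).comp (C q * X) = C (a * q ^ l) * X ^ l := by
      simp [mul_pow, mul_assoc]
    rw [← C_mul_X_pow_eq_monomial, hc, eulerFunctional_C_mul_X_pow, eulerFunctional_C_mul_X_pow]
    have := h l
    simp only [eval_mul, eval_C, eval_pow, eval_X, one_pow, mul_one]
    field_simp
    ring

open Polynomial in
theorem eulerFunctional_one_sub_X_pow {K : Type*} [Field K] (q : K) (k : ℕ) :
    eulerFunctional q ((1 - X) ^ k) =
      ∑ l ∈ Finset.range (k + 1), (k.choose l : K) * (-1) ^ l / (1 + q ^ (l + 1)) := by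
  have hb : ((1 - X : K[X])) ^ k =
      ∑ l ∈ Finset.range (k + 1), C ((k.choose l : K) * (-1) ^ l) * X ^ l := by
    rw [sub_eq_neg_add, add_pow]
    refine Finset.sum_congr rfl fun l _ => ?_
    rw [neg_pow]
    simp
    ring
  rw [hb, map_sum]
  exact Finset.sum_congr rfl fun l _ => eulerFunctional_C_mul_X_pow _ _ _

/-- If `q ^ m = -1`, then `2 = -(q ^ m - 1)` would be divisible by `q - 1`, hence of norm `< 1`,
which is impossible for odd `p`. -/
theorem one_add_pow_ne_zero_of_norm_sub_one_lt (p : ℕ) [Fact p.Prime] (hodd : Odd p)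
    (q : ℚ_[p]) (hq1 : ‖q - 1‖ < 1) (m : ℕ) : 1 + q ^ m ≠ 0 := by
  intro h
  have hq : ‖q‖ ≤ 1 := by
    have := Padic.nonarchimedean (q - 1) 1
    simp only [sub_add_cancel, norm_one] at this
    exact this.trans (max_le hq1.le le_rfl)
  have hs : ‖∑ i ∈ Finset.range m, q ^ i‖ ≤ 1 := by
    let x : ℤ_[p] := ⟨q, hq⟩
    have := PadicInt.norm_le_one (∑ i ∈ Finset.range m, x ^ i)
    rw [PadicInt.norm_def] at this
    rw [PadicInt.coe_sum] at this
    push_cast at this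
    exact this
  have h2 : ((2 : ℤ) : ℚ_[p]) = -((∑ i ∈ Finset.range m, q ^ i) * (q - 1)) := by
    rw [geom_sum_mul, eq_neg_of_add_eq_zero_right h]
    norm_num
  have hlt : ‖((2 : ℤ) : ℚ_[p])‖ < 1 := by
    rw [h2, norm_neg, norm_mul]
    exact (mul_le_of_le_one_left (norm_nonneg _) hs).trans_lt hq1
  rw [Padic.norm_intCast_lt_one_iff] at hlt
  have hp2 : p ∣ 2 := by exact_mod_cast hlt
  rw [(Nat.prime_dvd_prime_iff_eq Fact.out Nat.prime_two).mp hp2] at hodd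
  exact absurd hodd (by decide)


/-- Let `p` be an odd prime, `q ∈ ℚ_p` with `|q-1|_p < 1`, `q ≠ 1`, and let
`E_{n,q} = (1+q) · (1/(1-q))^n · Σ_{l=0}^n C(n,l)(-1)^l/(1+q^{l+1})`. Then
`q · Σ_{l=0}^n C(n,l) q^l E_{l,q} + E_{n,q}` equals `1+q` if `n = 0` and `0` if `n > 0`. -/
theorem stmt_12 (p : ℕ) [Fact p.Prime] (hodd : Odd p)
    (q : ℚ_[p]) (hq1 : ‖q - 1‖ < 1) (hq : q ≠ 1)
    (E : ℕ → ℚ_[p])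
    (hE : ∀ k : ℕ, E k = (1 + q) * (1 / (1 - q)) ^ k *
      ∑ l ∈ Finset.range (k + 1), (k.choose l : ℚ_[p]) * (-1) ^ l / (1 + q ^ (l + 1)))
    (n : ℕ) :
    q * (∑ l ∈ Finset.range (n + 1), (n.choose l : ℚ_[p]) * q ^ l * E l) + E n =
      if n = 0 then 1 + q else 0 := by

  have hq0 : (1 - q) ≠ 0 := sub_ne_zero.mpr hq.symm
  set f : Polynomial ℚ_[p] := Polynomial.C (1 / (1 - q)) * (1 - Polynomial.X) with hf
  have hEf : ∀ k, E k = (1 + q) * eulerFunctional q (f ^ k) := by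
    intro k
    rw [hE, hf, mul_pow, ← Polynomial.C_pow, eulerFunctional_C_mul,
      eulerFunctional_one_sub_X_pow, mul_assoc]
  have hcomp : f.comp (Polynomial.C q * Polynomial.X) = Polynomial.C q * f + 1 := by
    have h1 : Polynomial.C (1 / (1 - q)) * (1 - Polynomial.C q) = 1 := by
      rw [← Polynomial.C_1, ← Polynomial.C_sub, ← Polynomial.C_mul, one_div_mul_cancel hq0]
    simp only [hf, Polynomial.mul_comp, Polynomial.sub_comp, Polynomial.C_comp,
      Polynomial.one_comp, Polynomial.X_comp]
    linear_combination h1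
  have hsum : ∑ l ∈ Finset.range (n + 1), (n.choose l : ℚ_[p]) * q ^ l * E l =
      (1 + q) * eulerFunctional q ((f ^ n).comp (Polynomial.C q * Polynomial.X)) := by
    rw [Polynomial.pow_comp, hcomp, add_pow, map_sum, Finset.mul_sum]
    refine Finset.sum_congr rfl fun l _ => ?_
    have ht : (Polynomial.C q * f) ^ l * 1 ^ (n - l) * (n.choose l : Polynomial ℚ_[p]) =
        Polynomial.C ((n.choose l : ℚ_[p]) * q ^ l) * f ^ l := by
      simp [mul_pow]
      ring
    rw [ht, eulerFunctional_C_mul, hEf]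
    ring
  have hmain := eulerFunctional_comp q
    (fun l => one_add_pow_ne_zero_of_norm_sub_one_lt p hodd q hq1 (l + 1)) (f ^ n)
  have heval : (f ^ n).eval 1 = (0 : ℚ_[p]) ^ n := by simp [hf]
  rw [heval, zero_pow_eq] at hmain
  rw [hsum, hEf n]
  calc _ = (1 + q) * (if n = 0 then 1 else 0) := by rw [← hmain]; ring
    _ = _ := by split_ifs <;> simp
end

section
/- Let p be an odd prime, let q ∈ ℚ_p satisfy |q - 1|_p < 1 with q ≠ 1, and define E_{n,q}(x) = (1+q) · (1/(1-q))^n · Σ_{l=0}^n C(n,l) (-1)^l q^{l·x} / (1 + q^{l+1}) for nonnegative integers n and x, and E_{n,q} = E_{n,q}(0). Then for every nonnegative integer m and every even positive integer n: q^n E_{m,q}(n) − E_{m,q} = (1+q) · Σ_{l=0}^{n-1} (-1)^{l-1} q^l [l]_q^m. -/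
/-!
Expanding `[x]_q ^ m` by the binomial theorem cancels the denominators `1 + q ^ (l + 1)` in
`q E_{m,q}(x+1) + E_{m,q}(x) = (1+q) [x]_q ^ m`. Multiplying by `(-1) ^ (x+1) q ^ x` turns the left
side into the difference of `(-1) ^ x q ^ x E_{m,q}(x)` at `x + 1` and `x`, so the sum over
`x < n` telescopes; the sign at `x = n` is `1` because `n` is even.
The denominators do not vanish: `q ^ k` lies in the open unit ball around `1`, while `-1` does
not, since `2` is a unit in `ℤ_p` for odd `p`.
-/

lemma padic_norm_pow_sub_one_lt (p : ℕ) [Fact p.Prime] (q : ℚ_[p]) (hq1 : ‖q - 1‖ < 1) (k : ℕ) :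
    ‖q ^ k - 1‖ < 1 := by
  induction k with
  | zero => simp
  | succ k ih =>
    have h : q ^ (k + 1) - 1 = (q ^ k - 1) * (q - 1) + (q ^ k - 1) + (q - 1) := by ring
    rw [h]
    have hm : ‖(q ^ k - 1) * (q - 1)‖ < 1 := by
      rw [norm_mul]
      exact mul_lt_one_of_nonneg_of_lt_one_left (norm_nonneg _) ih hq1.le
    exact (Padic.nonarchimedean _ _).trans_lt
      (max_lt ((Padic.nonarchimedean _ _).trans_lt (max_lt hm ih)) hq1)

lemma padic_one_add_pow_ne_zero (p : ℕ) [Fact p.Prime] (hodd : Odd p) (q : ℚ_[p])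
    (hq1 : ‖q - 1‖ < 1) (k : ℕ) : 1 + q ^ k ≠ 0 := by
  intro h
  have h1 := padic_norm_pow_sub_one_lt p q hq1 k
  have h2 : q ^ k - 1 = ((-2 : ℤ) : ℚ_[p]) := by
    push_cast
    linear_combination h
  rw [h2, Padic.norm_intCast_lt_one_iff] at h1
  have h3 : p ∣ 2 := by
    rw [Int.dvd_neg] at h1
    exact_mod_cast h1
  have h4 := (Nat.prime_dvd_prime_iff_eq Fact.out Nat.prime_two).1 h3
  subst h4
  exact absurd hodd (by decide)

/-- Let `p` be an odd prime, `q ∈ ℚ_p` with `|q-1|_p < 1`, `q ≠ 1`, and define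
`E_{n,q}(x) = (1+q) · (1/(1-q))^n · Σ_{l=0}^n C(n,l)(-1)^l q^{l·x}/(1+q^{l+1})` and
`E_{n,q} = E_{n,q}(0)`. Then for every `m : ℕ` and every even positive integer `n`:
`q^n E_{m,q}(n) - E_{m,q} = (1+q) · Σ_{l=0}^{n-1} (-1)^{l-1} q^l [l]_q^m`. -/
theorem stmt_16 (p : ℕ) [Fact p.Prime] (hodd : Odd p)
    (q : ℚ_[p]) (hq1 : ‖q - 1‖ < 1) (hq : q ≠ 1)
    (E : ℕ → ℕ → ℚ_[p])
    (hE : ∀ k x : ℕ, E k x = (1 + q) * (1 / (1 - q)) ^ k *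
      ∑ l ∈ Finset.range (k + 1), (k.choose l : ℚ_[p]) * (-1) ^ l * q ^ (l * x) / (1 + q ^ (l + 1)))
    (m n : ℕ) (hn : 0 < n) (hneven : Even n) :
    q ^ n * E m n - E m 0 =
      (1 + q) * ∑ l ∈ Finset.range n,
        (-1 : ℚ_[p]) ^ (l - 1 : ℤ) * q ^ l * ((1 - q ^ l) / (1 - q)) ^ m := by
  have hne := padic_one_add_pow_ne_zero p hodd q hq1
  have step : ∀ x : ℕ, q * E m (x + 1) + E m x = (1 + q) * ((1 - q ^ x) / (1 - q)) ^ m := by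
    intro x
    have hb : (1 - q ^ x) ^ m =
        ∑ l ∈ Finset.range (m + 1), (m.choose l : ℚ_[p]) * (-1) ^ l * q ^ (l * x) := by
      rw [show 1 - q ^ x = -q ^ x + 1 by ring, add_pow]
      refine Finset.sum_congr rfl fun l _ => ?_
      rw [neg_pow, ← pow_mul, mul_comm x l]
      ring
    have hs : q * ∑ l ∈ Finset.range (m + 1),
          (m.choose l : ℚ_[p]) * (-1) ^ l * q ^ (l * (x + 1)) / (1 + q ^ (l + 1)) +
        ∑ l ∈ Finset.range (m + 1),
          (m.choose l : ℚ_[p]) * (-1) ^ l * q ^ (l * x) / (1 + q ^ (l + 1)) =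
        (1 - q ^ x) ^ m := by
      rw [hb, Finset.mul_sum, ← Finset.sum_add_distrib]
      refine Finset.sum_congr rfl fun l _ => ?_
      have := hne (l + 1)
      field_simp
      ring
    rw [hE, hE, div_eq_mul_one_div (1 - q ^ x), mul_pow, ← hs]
    ring
  have tel := Finset.sum_range_sub (fun x => (-1 : ℚ_[p]) ^ x * q ^ x * E m x) n
  simp only [hneven.neg_one_pow, pow_zero, one_mul] at tel
  rw [← tel, Finset.mul_sum]
  refine Finset.sum_congr rfl fun x _ => ?_
  have hz : (-1 : ℚ_[p]) ^ (x - 1 : ℤ) = -(-1) ^ x := by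
    rw [zpow_sub₀ (by norm_num), zpow_natCast]
    simp [div_neg]
  rw [hz]
  linear_combination (-(-1) ^ x * q ^ x) * step x
end
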